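/- Let γ : ℝ → ℂ be a smooth curve parametrized by arclength with γ(t) ≠ 0 for all t, satisfying the Anciaux equation γ''(t) = ⟨γ'(t), i·γ(t)⟩·((|γ(t)|² − 1)/|γ(t)|²) · i·γ'(t), and set E = |γ(0)|·⟨γ'(0), i·γ(0)⟩·e^{−|γ(0)|²/2} and r(t) = |γ(t)|. Then the squared norm of the mean curvature vector of the Anciaux immersion φ(t,s) = γ(t)·(cos s, sin s) satisfies, for all (t,s): ‖∂_t²φ + (⟨γ(t), γ'(t)⟩/r(t)²)·∂_tφ + (1/r(t)²)·∂_s²φ‖² = E²·e^{r(t)²}/r(t)². -/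

import Mathlib

/-- Real inner product on ℂ ≅ ℝ²: ⟨u,v⟩ = Re(u · conj v). -/
noncomputable def rinner (u v : ℂ) : ℝ := u.re * v.re + u.im * v.im

/-- Squared Euclidean norm on ℂ² ≅ ℝ⁴. -/
noncomputable def norm2 (v : ℂ × ℂ) : ℝ := ‖v.1‖ ^ 2 + ‖v.2‖ ^ 2

/-- Partial derivative of F : ℝ² → ℂ² in the first variable. -/
noncomputable def pd1 (F : ℝ → ℝ → ℂ × ℂ) (a b : ℝ) : ℂ × ℂ := deriv (fun x => F x b) a

/-- Partial derivative of F : ℝ² → ℂ² in the second variable. -/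
noncomputable def pd2 (F : ℝ → ℝ → ℂ × ℂ) (a b : ℝ) : ℂ × ℂ := deriv (fun y => F a y) b

/-- The Anciaux immersion φ(t,s) = γ(t)(cos s, sin s). -/
noncomputable def anciauxMap (γ : ℝ → ℂ) (t s : ℝ) : ℂ × ℂ :=
  (γ t * Real.cos s, γ t * Real.sin s)

/-!
Write `r = |γ|` and `w = ⟨γ', i γ⟩`. The equation prescribes the signed curvature `w (r² - 1) / r²`,
so `w' = w ((r² - 1) / r²) ⟨γ, γ'⟩`; together with `r r' = ⟨γ, γ'⟩` this makes `r w e^{-r²/2}`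
constant. Decomposing `γ` in the frame `γ'`, `i γ'` collapses the mean curvature vector to
`w i γ' (cos s, sin s)`, whose norm is `|w|`, and the constant expresses `w` through `r`.
-/

open scoped Topology Real

lemma rinner_eq_inner (u v : ℂ) : rinner u v = inner ℝ u v := by
  simp only [rinner, Complex.inner, Complex.mul_re, Complex.conj_re, Complex.conj_im]
  ring

lemma rinner_self_I_mul (v : ℂ) : rinner v (Complex.I * v) = 0 := by
  simp only [rinner, Complex.I_mul_re, Complex.I_mul_im]
  ring

lemma rinner_I_mul_I_mul (u v : ℂ) : rinner (Complex.I * u) (Complex.I * v) = rinner u v := by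
  simp only [rinner, Complex.I_mul_re, Complex.I_mul_im]
  ring

lemma rinner_smul_left (c : ℝ) (u v : ℂ) : rinner (c • u) v = c * rinner u v := by
  simp only [rinner_eq_inner, real_inner_smul_left]

lemma rinner_comm (u v : ℂ) : rinner u v = rinner v u := by
  simp only [rinner_eq_inner, real_inner_comm]

lemma rinner_smul_sub_norm_sq_smul (z v : ℂ) :
    rinner z v • v - ‖v‖ ^ 2 • z = rinner v (Complex.I * z) • (Complex.I * v) := by
  rw [Complex.sq_norm, Complex.normSq_apply]
  apply Complex.ext <;>
    simp only [rinner, Complex.smul_re, Complex.smul_im, Complex.sub_re, Complex.sub_im,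
      Complex.I_mul_re, Complex.I_mul_im, smul_eq_mul] <;>
    ring

lemma hasDerivAt_norm_of_ne_zero {F : Type*} [NormedAddCommGroup F] [InnerProductSpace ℝ F]
    {f : ℝ → F} {f' : F} {t : ℝ} (hf : HasDerivAt f f' t) (hne : f t ≠ 0) :
    HasDerivAt (fun x => ‖f x‖) (inner ℝ (f t) f' / ‖f t‖) t := by
  have hsqrt := hf.norm_sq.sqrt (by simpa using hne)
  simp only [Real.sqrt_sq (norm_nonneg _)] at hsqrt
  exact hsqrt.congr_deriv (mul_div_mul_left _ _ two_ne_zero)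

lemma norm2_anciauxMap (f : ℝ → ℂ) (t s : ℝ) : norm2 (anciauxMap f t s) = ‖f t‖ ^ 2 := by
  simp only [norm2, anciauxMap, norm_mul, Complex.norm_real, Real.norm_eq_abs, mul_pow, sq_abs]
  rw [← mul_add, Real.cos_sq_add_sin_sq, mul_one]

lemma anciauxMap_add (f g : ℝ → ℂ) (t s : ℝ) :
    anciauxMap (f + g) t s = anciauxMap f t s + anciauxMap g t s := by
  simp only [anciauxMap, Pi.add_apply, add_mul, Prod.mk_add_mk]

lemma anciauxMap_smul (c : ℝ) (f : ℝ → ℂ) (t s : ℝ) :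
    anciauxMap (c • f) t s = c • anciauxMap f t s := by
  simp only [anciauxMap, Pi.smul_apply, smul_mul_assoc, Prod.smul_mk]

lemma anciauxMap_neg (f : ℝ → ℂ) (t s : ℝ) : anciauxMap (-f) t s = -anciauxMap f t s := by
  simp only [anciauxMap, Pi.neg_apply, neg_mul, Prod.neg_mk]

lemma anciauxMap_add_pi (f : ℝ → ℂ) (t s : ℝ) : anciauxMap f t (s + π) = -anciauxMap f t s := by
  simp only [anciauxMap, Real.cos_add_pi, Real.sin_add_pi, Complex.ofReal_neg, mul_neg,
    Prod.neg_mk]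

lemma pd1_anciauxMap {f : ℝ → ℂ} {t : ℝ} (hf : DifferentiableAt ℝ f t) (s : ℝ) :
    pd1 (anciauxMap f) t s = anciauxMap (deriv f) t s :=
  ((hf.hasDerivAt.mul_const _).prodMk (hf.hasDerivAt.mul_const _)).deriv

lemma pd1_pd1_anciauxMap {f : ℝ → ℂ} {t : ℝ} (hf : ∀ᶠ x in 𝓝 t, DifferentiableAt ℝ f x)
    (hf' : DifferentiableAt ℝ (deriv f) t) (s : ℝ) :
    pd1 (pd1 (anciauxMap f)) t s = anciauxMap (deriv (deriv f)) t s := by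
  have hpd1 : (fun x => pd1 (anciauxMap f) x s) =ᶠ[𝓝 t] fun x => anciauxMap (deriv f) x s :=
    hf.mono fun x hx => pd1_anciauxMap hx s
  exact hpd1.deriv_eq.trans (pd1_anciauxMap hf' s)

lemma pd2_anciauxMap (f : ℝ → ℂ) (t s : ℝ) :
    pd2 (anciauxMap f) t s = anciauxMap f t (s + π / 2) := by
  have hcos := (Real.hasDerivAt_cos s).ofReal_comp.const_mul (f t)
  have hsin := (Real.hasDerivAt_sin s).ofReal_comp.const_mul (f t)
  rw [anciauxMap, Real.cos_add_pi_div_two, Real.sin_add_pi_div_two]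
  exact (hcos.prodMk hsin).deriv

lemma pd2_pd2_anciauxMap (f : ℝ → ℂ) (t s : ℝ) :
    pd2 (pd2 (anciauxMap f)) t s = -anciauxMap f t s :=
  calc pd2 (pd2 (anciauxMap f)) t s
      = deriv (fun y => anciauxMap f t (y + π / 2)) s := by simp only [pd2, ← pd2_anciauxMap]
    _ = pd2 (anciauxMap f) t (s + π / 2) := deriv_comp_add_const _ _ _
    _ = -anciauxMap f t s := by rw [pd2_anciauxMap, add_assoc, add_halves, anciauxMap_add_pi]

/-- The mean curvature vector of `anciauxMap γ` at `(t, s)`: the Laplace–Beltrami operator of the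
metric `dt² + |γ|² ds²` applied to the map. This metric is the induced one where `γ` has unit
speed. -/
noncomputable def anciauxMeanCurvature (γ : ℝ → ℂ) (t s : ℝ) : ℂ × ℂ :=
  pd1 (pd1 (anciauxMap γ)) t s
    + (rinner (γ t) (deriv γ t) / ‖γ t‖ ^ 2) • pd1 (anciauxMap γ) t s
    + (1 / ‖γ t‖ ^ 2) • pd2 (pd2 (anciauxMap γ)) t s

lemma anciauxMeanCurvature_eq {γ : ℝ → ℂ} {t : ℝ} (hγ : ∀ᶠ x in 𝓝 t, DifferentiableAt ℝ γ x)
    (hγ' : DifferentiableAt ℝ (deriv γ) t) (s : ℝ) :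
    anciauxMeanCurvature γ t s =
      anciauxMap (deriv (deriv γ) + (rinner (γ t) (deriv γ t) / ‖γ t‖ ^ 2) • deriv γ
        + (1 / ‖γ t‖ ^ 2) • -γ) t s := by
  rw [anciauxMeanCurvature, pd1_pd1_anciauxMap hγ hγ', pd1_anciauxMap hγ.self_of_nhds,
    pd2_pd2_anciauxMap, anciauxMap_add, anciauxMap_add, anciauxMap_smul, anciauxMap_smul,
    anciauxMap_neg]

/-- The quantity `⟨γ', i γ⟩`, the angular momentum of the plane curve `γ` about the origin. -/
noncomputable def angularMomentum (γ : ℝ → ℂ) (t : ℝ) : ℝ :=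
  rinner (deriv γ t) (Complex.I * γ t)

/-- The first integral `E = |γ| ⟨γ', i γ⟩ e^{-|γ|²/2}` of the Anciaux equation. -/
noncomputable def anciauxEnergy (γ : ℝ → ℂ) (t : ℝ) : ℝ :=
  ‖γ t‖ * angularMomentum γ t * Real.exp (-‖γ t‖ ^ 2 / 2)

lemma angularMomentum_sq_eq {γ : ℝ → ℂ} {t : ℝ} (hne : γ t ≠ 0) :
    angularMomentum γ t ^ 2 = anciauxEnergy γ t ^ 2 * Real.exp (‖γ t‖ ^ 2) / ‖γ t‖ ^ 2 := by
  have hexp : Real.exp (-‖γ t‖ ^ 2 / 2) ^ 2 * Real.exp (‖γ t‖ ^ 2) = 1 := by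
    rw [← Real.exp_nat_mul, ← Real.exp_add, Real.exp_eq_one_iff]
    push_cast
    ring
  rw [eq_div_iff (pow_ne_zero 2 (norm_ne_zero_iff.mpr hne)), anciauxEnergy]
  linear_combination -(‖γ t‖ * angularMomentum γ t) ^ 2 * hexp

/-- A twice differentiable solution of the Anciaux equation on `u` that avoids the origin. Arclength
parametrization is not included. -/
structure IsAnciauxCurveOn (γ : ℝ → ℂ) (u : Set ℝ) : Prop where
  differentiableAt : ∀ t ∈ u, DifferentiableAt ℝ γ t
  differentiableAt_deriv : ∀ t ∈ u, DifferentiableAt ℝ (deriv γ) t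
  ne_zero : ∀ t ∈ u, γ t ≠ 0
  deriv_deriv : ∀ t ∈ u, deriv (deriv γ) t =
    (angularMomentum γ t * ((‖γ t‖ ^ 2 - 1) / ‖γ t‖ ^ 2)) • (Complex.I * deriv γ t)

namespace IsAnciauxCurveOn

variable {γ : ℝ → ℂ} {u : Set ℝ} {t : ℝ}

lemma hasDerivAt_angularMomentum (h : IsAnciauxCurveOn γ u) (ht : t ∈ u) :
    HasDerivAt (angularMomentum γ)
      (angularMomentum γ t * ((‖γ t‖ ^ 2 - 1) / ‖γ t‖ ^ 2) * rinner (γ t) (deriv γ t)) t := by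
  have hderiv := (h.differentiableAt_deriv t ht).hasDerivAt.inner ℝ
    ((h.differentiableAt t ht).hasDerivAt.const_mul Complex.I)
  simp only [← rinner_eq_inner] at hderiv
  refine hderiv.congr_deriv ?_
  rw [rinner_self_I_mul, zero_add, h.deriv_deriv t ht, rinner_smul_left, rinner_I_mul_I_mul,
    rinner_comm]

lemma hasDerivAt_anciauxEnergy (h : IsAnciauxCurveOn γ u) (ht : t ∈ u) :
    HasDerivAt (anciauxEnergy γ) 0 t := by
  have hne : ‖γ t‖ ≠ 0 := norm_ne_zero_iff.mpr (h.ne_zero t ht)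
  have hγ := (h.differentiableAt t ht).hasDerivAt
  have hnorm := hasDerivAt_norm_of_ne_zero hγ (h.ne_zero t ht)
  have hexp := (hγ.norm_sq.fun_neg.div_const 2).exp
  rw [← rinner_eq_inner] at hnorm hexp
  refine ((hnorm.fun_mul (h.hasDerivAt_angularMomentum ht)).fun_mul hexp).congr_deriv ?_
  field_simp
  ring

theorem anciauxEnergy_eq_of_mem (h : IsAnciauxCurveOn γ u) (hopen : IsOpen u)
    (hconn : IsPreconnected u) {t₀ : ℝ} (ht₀ : t₀ ∈ u) (ht : t ∈ u) :
    anciauxEnergy γ t = anciauxEnergy γ t₀ :=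
  hopen.is_const_of_deriv_eq_zero hconn
    (fun _ hx => (h.hasDerivAt_anciauxEnergy hx).differentiableAt.differentiableWithinAt)
    (fun _ hx => (h.hasDerivAt_anciauxEnergy hx).deriv) ht ht₀

lemma deriv_deriv_add_smul_add_smul (h : IsAnciauxCurveOn γ u) (ht : t ∈ u)
    (hspeed : ‖deriv γ t‖ = 1) :
    deriv (deriv γ) t + (rinner (γ t) (deriv γ t) / ‖γ t‖ ^ 2) • deriv γ t
      + (1 / ‖γ t‖ ^ 2) • -γ t = angularMomentum γ t • (Complex.I * deriv γ t) := by
  have hne : ‖γ t‖ ≠ 0 := norm_ne_zero_iff.mpr (h.ne_zero t ht)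
  have hframe : rinner (γ t) (deriv γ t) • deriv γ t - γ t =
      angularMomentum γ t • (Complex.I * deriv γ t) := by
    simpa only [hspeed, one_pow, one_smul, angularMomentum] using
      rinner_smul_sub_norm_sq_smul (γ t) (deriv γ t)
  calc _ = (angularMomentum γ t * ((‖γ t‖ ^ 2 - 1) / ‖γ t‖ ^ 2)) • (Complex.I * deriv γ t)
          + (1 / ‖γ t‖ ^ 2) • (rinner (γ t) (deriv γ t) • deriv γ t - γ t) := by
        rw [h.deriv_deriv t ht]
        module
    _ = angularMomentum γ t • (Complex.I * deriv γ t) := by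
        rw [hframe, smul_smul, ← add_smul]
        congr 1
        field_simp
        ring

theorem norm2_anciauxMeanCurvature (h : IsAnciauxCurveOn γ u) (hopen : IsOpen u) (ht : t ∈ u)
    (hspeed : ‖deriv γ t‖ = 1) (s : ℝ) :
    norm2 (anciauxMeanCurvature γ t s) = angularMomentum γ t ^ 2 := by
  have hγ : ∀ᶠ x in 𝓝 t, DifferentiableAt ℝ γ x :=
    (hopen.eventually_mem ht).mono h.differentiableAt
  rw [anciauxMeanCurvature_eq hγ (h.differentiableAt_deriv t ht), norm2_anciauxMap]
  simp only [Pi.add_apply, Pi.smul_apply, Pi.neg_apply]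
  rw [h.deriv_deriv_add_smul_add_smul ht hspeed, norm_smul, norm_mul, Complex.norm_I, hspeed,
    one_mul, mul_one, Real.norm_eq_abs, sq_abs]

end IsAnciauxCurveOn

/-- Local curves include the case `E = 0`: a unit-speed solution with `E = 0` runs along a line
through the origin, hence cannot be defined on all of `ℝ`. -/
theorem anciaux_mean_curvature_general {γ : ℝ → ℂ} {u : Set ℝ} (h : IsAnciauxCurveOn γ u)
    (hopen : IsOpen u) (hconn : IsPreconnected u) {t₀ t : ℝ} (ht₀ : t₀ ∈ u) (ht : t ∈ u)
    (hspeed : ‖deriv γ t‖ = 1) (s : ℝ) :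
    norm2 (anciauxMeanCurvature γ t s) =
      anciauxEnergy γ t₀ ^ 2 * Real.exp (‖γ t‖ ^ 2) / ‖γ t‖ ^ 2 := by
  rw [h.norm2_anciauxMeanCurvature hopen ht hspeed, angularMomentum_sq_eq (h.ne_zero t ht),
    h.anciauxEnergy_eq_of_mem hopen hconn ht₀ ht]

/-- The squared norm of the mean curvature vector of the Anciaux immersion
φ(t,s) = γ(t)(cos s, sin s) equals E² e^{r²}/r², where r = |γ| and
E = |γ(0)|⟨γ'(0), iγ(0)⟩e^{-|γ(0)|²/2}. -/
theorem anciaux_mean_curvature (γ : ℝ → ℂ) (hsmooth : ContDiff ℝ (⊤ : ℕ∞) γ)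
    (harc : ∀ t, ‖deriv γ t‖ = 1) (hne : ∀ t, γ t ≠ 0)
    (hAnc : ∀ t, deriv (deriv γ) t =
      (rinner (deriv γ t) (Complex.I * γ t) * ((‖γ t‖ ^ 2 - 1) / ‖γ t‖ ^ 2))
        • (Complex.I * deriv γ t)) :
    ∀ t s : ℝ,
      norm2 (pd1 (pd1 (anciauxMap γ)) t s
          + (rinner (γ t) (deriv γ t) / ‖γ t‖ ^ 2) • pd1 (anciauxMap γ) t s
          + (1 / ‖γ t‖ ^ 2) • pd2 (pd2 (anciauxMap γ)) t s)
        = (‖γ 0‖ * rinner (deriv γ 0) (Complex.I * γ 0)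
            * Real.exp (-‖γ 0‖ ^ 2 / 2)) ^ 2
          * Real.exp (‖γ t‖ ^ 2) / ‖γ t‖ ^ 2 := by
  intro t s
  have hcurve : IsAnciauxCurveOn γ Set.univ :=
    { differentiableAt := fun t _ => hsmooth.differentiable (by simp) t
      differentiableAt_deriv := fun t _ =>
        (contDiff_infty_iff_deriv.mp hsmooth).2.differentiable (by simp) t
      ne_zero := fun t _ => hne t
      deriv_deriv := fun t _ => hAnc t }
  exact anciaux_mean_curvature_general hcurve isOpen_univ isPreconnected_univ
    (Set.mem_univ 0) (Set.mem_univ t) (harc t) s
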